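/- arXiv:2210.08900 — 2 statements merged into one kernel-verified Lean document; each statement's English description precedes it below -/
import Mathlib

section
/- Let X₁ and X₂ be independent random variables, each exponentially distributed with rate 1, and let 0 < α ≤ 1/2. Then E[max{X₁ + log₂(α)/2, X₂ + log₂(1−α)/2}] = log₂(1−α)/2 + 1 + (1/2)·(α/(1−α))^{1/(2 ln 2)}. -/
/-!
The expectation is computed from the excess of one variable over the other. With
`a = log₂ α / 2`, `b = log₂ (1 - α) / 2` and `d = b - a`, which is nonnegative as `α ≤ 1 / 2`,
`max (x + a) (y + b) = b + y + max (x - (y + d)) 0`.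
The mean excess of a rate-1 exponential variable over a level `c ≥ 0` is `exp (-c)`
(`integral_excess`, the memoryless property), so conditioning on `X₂ = y` leaves
`E[b + X₂ + exp (-(X₂ + d))] = b + 1 + exp (-d) / 2`, and `exp (-d) = (α / (1 - α)) ^ (1 / (2 ln 2))`.
-/

open MeasureTheory ProbabilityTheory Real

attribute [local instance] Classical.propDecidable

lemma expMeasure_one_eq : expMeasure 1 =
    (volume.restrict (Set.Ioi 0)).withDensity (fun x : ℝ => ENNReal.ofReal (exp (-x))) := by
  rw [← withDensity_indicator measurableSet_Ioi]
  refine withDensity_congr_ae ?_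
  -- The library's density lives on `[0, ∞)`, so the two densities differ at `0` only.
  filter_upwards [compl_mem_ae_iff.mpr (measure_singleton (0 : ℝ))] with x hx
  have hx0 : x ≠ 0 := hx
  change exponentialPDF 1 x = _
  rcases lt_or_gt_of_ne hx0 with h | h
  · rw [exponentialPDF_of_neg h, Set.indicator_of_notMem (by simpa using h.le)]
  · rw [exponentialPDF_of_nonneg h.le, Set.indicator_of_mem (by simpa using h)]
    simp

lemma integral_expMeasure_one (f : ℝ → ℝ) :
    ∫ x, f x ∂(expMeasure 1) = ∫ x in Set.Ioi 0, exp (-x) * f x := by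
  rw [expMeasure_one_eq, integral_withDensity_eq_integral_toReal_smul (by fun_prop) (by simp)]
  simp [ENNReal.toReal_ofReal, (exp_pos _).le]

lemma integrable_expMeasure_one (f : ℝ → ℝ) :
    Integrable f (expMeasure 1) ↔ IntegrableOn (fun x => exp (-x) * f x) (Set.Ioi 0) := by
  rw [expMeasure_one_eq, integrable_withDensity_iff_integrable_smul' (by fun_prop) (by simp)]
  simp [ENNReal.toReal_ofReal, (exp_pos _).le, IntegrableOn]

lemma integrable_id_expMeasure_one : Integrable (fun x : ℝ => x) (expMeasure 1) := by
  rw [integrable_expMeasure_one]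
  have := Real.GammaIntegral_convergent (s := 2) (by norm_num)
  norm_num at this
  exact this

lemma setIntegral_exp_neg_mul_id : ∫ x in Set.Ioi (0 : ℝ), exp (-x) * x = 1 := by
  have := Real.Gamma_eq_integral (s := 2) (by norm_num)
  norm_num [Real.Gamma_two] at this
  exact this.symm

/-- Memoryless property: the mean excess of a rate-1 exponential variable over the level `c`
is its survival probability `exp (-c)` times its mean `1`. -/
lemma integral_excess {c : ℝ} (hc : 0 ≤ c) :
    ∫ x, max (x - c) 0 ∂(expMeasure 1) = exp (-c) := by
  rw [integral_expMeasure_one]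
  have h1 : (fun x => exp (-x) * max (x - c) 0) =
      (Set.Ioi c).indicator (fun x => exp (-x) * (x - c)) := by
    ext x
    by_cases h : c < x
    · rw [Set.indicator_of_mem (by simpa using h), max_eq_left (by linarith)]
    · rw [Set.indicator_of_notMem (by simpa using h), max_eq_right (by linarith), mul_zero]
  rw [h1, setIntegral_indicator measurableSet_Ioi, Set.Ioi_inter_Ioi, sup_eq_right.mpr hc,
    ← integral_indicator measurableSet_Ioi, ← integral_add_right_eq_self _ c]
  have h2 : (fun x => (Set.Ioi c).indicator (fun x => exp (-x) * (x - c)) (x + c)) =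
      (Set.Ioi 0).indicator (fun x => exp (-c) * (exp (-x) * x)) := by
    ext x
    by_cases h : 0 < x
    · rw [Set.indicator_of_mem (by simpa using h), Set.indicator_of_mem (by simpa using h),
        neg_add, exp_add]
      ring
    · rw [Set.indicator_of_notMem (by simpa using h), Set.indicator_of_notMem (by simpa using h)]
  rw [h2, integral_indicator measurableSet_Ioi, integral_const_mul, setIntegral_exp_neg_mul_id,
    mul_one]

lemma integral_exp_neg_add (d : ℝ) :
    ∫ y, exp (-(y + d)) ∂(expMeasure 1) = exp (-d) / 2 := by
  rw [integral_expMeasure_one]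
  have h : ∀ y : ℝ, exp (-y) * exp (-(y + d)) = exp (-d) * exp (-2 * y) := by
    intro y
    rw [← exp_add, ← exp_add]
    congr 1
    ring
  simp_rw [h]
  rw [integral_const_mul, integral_exp_mul_Ioi (by norm_num)]
  simp
  ring

/-- The expectation under the joint law, for arbitrary shifts `a ≤ b`. -/
lemma integral_max_prod {a b : ℝ} (hab : a ≤ b) :
    ∫ p : ℝ × ℝ, max (p.1 + a) (p.2 + b) ∂((expMeasure 1).prod (expMeasure 1)) =
      b + 1 + exp (a - b) / 2 := by
  have := isProbabilityMeasure_expMeasure (zero_lt_one (α := ℝ))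
  have i1 : Integrable (fun p : ℝ × ℝ => p.1) ((expMeasure 1).prod (expMeasure 1)) :=
    integrable_id_expMeasure_one.comp_fst _
  have i2 : Integrable (fun p : ℝ × ℝ => p.2) ((expMeasure 1).prod (expMeasure 1)) :=
    integrable_id_expMeasure_one.comp_snd _
  have i3 : Integrable (fun p : ℝ × ℝ => max (p.1 - (p.2 + (b - a))) 0)
      ((expMeasure 1).prod (expMeasure 1)) :=
    (i1.sub (i2.add (integrable_const (b - a)))).pos_part
  have i4 : Integrable (fun p : ℝ × ℝ => p.2 + b) ((expMeasure 1).prod (expMeasure 1)) :=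
    i2.add (integrable_const b)
  have hsplit : ∀ p : ℝ × ℝ, max (p.1 + a) (p.2 + b) =
      (p.2 + b) + max (p.1 - (p.2 + (b - a))) 0 := by
    intro p
    rw [← max_add_add_left, max_comm, add_zero, max_comm]
    congr 1
    ring
  simp_rw [hsplit]
  rw [integral_add i4 i3, integral_add i2 (integrable_const b),
    integral_prod_symm _ i3]
  have hpos : ∀ᵐ y ∂(expMeasure 1), 0 < y := by
    rw [expMeasure_one_eq]
    exact (withDensity_absolutelyContinuous _ _).ae_le (ae_restrict_mem measurableSet_Ioi)
  have h3 : ∫ y, ∫ x, max (x - (y + (b - a))) 0 ∂(expMeasure 1) ∂(expMeasure 1) =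
      exp (-(b - a)) / 2 := by
    rw [← integral_exp_neg_add]
    refine integral_congr_ae ?_
    filter_upwards [hpos] with y hy
    exact integral_excess (by linarith)
  have h4 : ∫ p : ℝ × ℝ, p.2 ∂((expMeasure 1).prod (expMeasure 1)) = 1 := by
    rw [integral_fun_snd (fun y : ℝ => y), integral_expMeasure_one, setIntegral_exp_neg_mul_id]
    simp
  rw [h3, h4, neg_sub]
  simp
  ring

/-- If `X₁, X₂` are independent `exp(1)` random variables and `0 < α ≤ 1/2`, then
`𝔼[max {X₁ + log₂ α / 2, X₂ + log₂ (1-α) / 2}]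
  = log₂(1-α)/2 + 1 + (α/(1-α))^(1/(2 ln 2)) / 2`. -/
theorem stmt_11 (Ω : Type) [MeasurableSpace Ω] (μ : Measure Ω) [IsProbabilityMeasure μ]
    (X₁ X₂ : Ω → ℝ) (h₁ : Measurable X₁) (h₂ : Measurable X₂)
    (hind : IndepFun X₁ X₂ μ)
    (hl₁ : Measure.map X₁ μ = expMeasure 1) (hl₂ : Measure.map X₂ μ = expMeasure 1)
    (α : ℝ) (hα0 : 0 < α) (hα : α ≤ 1 / 2) :
    ∫ ω, max (X₁ ω + Real.logb 2 α / 2) (X₂ ω + Real.logb 2 (1 - α) / 2) ∂μ =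
      Real.logb 2 (1 - α) / 2 + 1 + (α / (1 - α)) ^ (1 / (2 * Real.log 2)) / 2 := by
  have hα1 : 0 < 1 - α := by linarith
  have hlog : Real.logb 2 α / 2 ≤ Real.logb 2 (1 - α) / 2 := by
    have := Real.logb_le_logb_of_le (b := 2) (by norm_num) hα0 (by linarith : α ≤ 1 - α)
    linarith
  have hmap := (indepFun_iff_map_prod_eq_prod_map_map h₁.aemeasurable h₂.aemeasurable).mp hind
  rw [hl₁, hl₂] at hmap
  have key := integral_max_prod hlog
  rw [← hmap, integral_map (by fun_prop) (by fun_prop)] at key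
  rw [key, Real.rpow_def_of_pos (by positivity), Real.log_div hα0.ne' hα1.ne']
  congr 3
  unfold Real.logb
  field_simp
end

section
/- For every real number α with 0 < α ≤ 1/2, the function g(α) = log₂(1−α)/2 + 1 + (1/2)·(α/(1−α))^{1/(2 ln 2)} satisfies g(α) ≥ 1, with equality at α = 1/2; moreover g(α) → 1 as α → 0⁺. -/
/-! With `x = α / (1 - α) ∈ (0, 1]` one has `1 - α = 1 / (1 + x)`, so the inequality says
`log (1 + x) ≤ log 2 * x ^ c` with `c = 1 / (2 log 2)`. Both sides agree at `x = 1`, so it suffices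
that `log (log (1 + x)) - c * log x` is increasing on `(0, 1]`. Its derivative is nonnegative exactly
when `(1 + x) * log (1 + x) ≤ 2 * log 2 * x`, which is the chord bound on `[1, 2]` for the convex
function `u * log u`. The limit at `0` is continuity, the exponent `c` being positive. -/

open MeasureTheory ProbabilityTheory Real

attribute [local instance] Classical.propDecidable

/-- The convex function `u * log u` lies below its chord on `[1, 2]`, with `u = 1 + x`. -/
lemma one_add_mul_log_le {x : ℝ} (h0 : 0 ≤ x) (h1 : x ≤ 1) :
    (1 + x) * Real.log (1 + x) ≤ 2 * Real.log 2 * x := by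
  have h := Real.convexOn_mul_log.2 (Set.mem_Ici.2 zero_le_one) (Set.mem_Ici.2 zero_le_two)
    (sub_nonneg.2 h1) h0 (sub_add_cancel 1 x)
  have e : (1 - x) * 1 + x * 2 = 1 + x := by ring
  simp only [smul_eq_mul, e, Real.log_one] at h
  linarith

lemma monotoneOn_loglog_sub :
    MonotoneOn (fun x : ℝ => Real.log (Real.log (1 + x)) - 1 / (2 * Real.log 2) * Real.log x)
      (Set.Ioc 0 1) := by
  have hd : ∀ x : ℝ, 0 < x →
      HasDerivAt (fun x : ℝ => Real.log (Real.log (1 + x)) - 1 / (2 * Real.log 2) * Real.log x)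
        (1 / (1 + x) / Real.log (1 + x) - 1 / (2 * Real.log 2) * x⁻¹) x := by
    intro x hx
    have hl : 0 < Real.log (1 + x) := Real.log_pos (by linarith)
    exact ((((hasDerivAt_id x).const_add 1).log (by simp; linarith)).log hl.ne').sub
      ((Real.hasDerivAt_log hx.ne').const_mul _)
  refine monotoneOn_of_deriv_nonneg (convex_Ioc 0 1)
    (fun x hx => (hd x hx.1).continuousAt.continuousWithinAt)
    (fun x hx => ?_) (fun x hx => ?_)
  · exact (hd x (interior_subset hx).1).differentiableAt.differentiableWithinAt
  · obtain ⟨h0, h1⟩ := interior_subset hx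
    rw [(hd x h0).deriv, sub_nonneg, div_div, ← one_div, div_mul_div_comm, one_mul]
    have hl : 0 < Real.log (1 + x) := Real.log_pos (by linarith)
    exact one_div_le_one_div_of_le (by positivity) (one_add_mul_log_le h0.le h1)

lemma log_one_add_le {x : ℝ} (h0 : 0 < x) (h1 : x ≤ 1) :
    Real.log (1 + x) ≤ Real.log 2 * x ^ (1 / (2 * Real.log 2)) := by
  have h := monotoneOn_loglog_sub ⟨h0, h1⟩ ⟨one_pos, le_rfl⟩ h1
  have hl : 0 < Real.log (1 + x) := Real.log_pos (by linarith)
  have h2 : 0 < Real.log 2 := Real.log_pos one_lt_two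
  have hp := Real.rpow_pos_of_pos h0 (1 / (2 * Real.log 2))
  norm_num only [Real.log_one, mul_zero, sub_zero] at h
  rw [← Real.log_le_log_iff hl (by positivity), Real.log_mul h2.ne' hp.ne', Real.log_rpow h0]
  linarith

/-- The function `g(α) = log₂(1-α)/2 + 1 + (α/(1-α))^(1/(2 ln 2)) / 2` satisfies
`g(α) ≥ 1` on `(0, 1/2]`, with equality at `α = 1/2`, and `g(α) → 1` as `α → 0⁺`. -/
theorem stmt_14 :
    (∀ α : ℝ, 0 < α → α ≤ 1 / 2 →
      1 ≤ Real.logb 2 (1 - α) / 2 + 1 + (α / (1 - α)) ^ (1 / (2 * Real.log 2)) / 2) ∧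
    (Real.logb 2 (1 - (1 / 2 : ℝ)) / 2 + 1 +
      ((1 / 2 : ℝ) / (1 - (1 / 2 : ℝ))) ^ (1 / (2 * Real.log 2)) / 2 = 1) ∧
    Filter.Tendsto
      (fun α : ℝ =>
        Real.logb 2 (1 - α) / 2 + 1 + (α / (1 - α)) ^ (1 / (2 * Real.log 2)) / 2)
      (nhdsWithin 0 (Set.Ioi 0)) (nhds 1) := by
  have h2 : 0 < Real.log 2 := Real.log_pos one_lt_two
  refine ⟨fun α h0 h1 => ?_, ?_, ?_⟩
  · have hb : 0 < 1 - α := by linarith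
    have h := log_one_add_le (x := α / (1 - α)) (by positivity)
      (by rw [div_le_one hb]; linarith)
    have e : 1 + α / (1 - α) = (1 - α)⁻¹ := by field_simp; ring
    rw [e, Real.log_inv, mul_comm, ← div_le_iff₀ h2, neg_div, Real.log_div_log] at h
    linarith
  · have e : (1 - 1 / 2 : ℝ) = 2⁻¹ := by norm_num
    rw [e, Real.logb_inv, Real.logb_self_eq_one one_lt_two]
    norm_num
  · have hc : 0 < 1 / (2 * Real.log 2) := by positivity
    have hcont : ContinuousAt (fun α : ℝ =>
        Real.logb 2 (1 - α) / 2 + 1 + (α / (1 - α)) ^ (1 / (2 * Real.log 2)) / 2) 0 := by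
      have hs : ContinuousAt (fun α : ℝ => 1 - α) 0 := by fun_prop
      have hq : ContinuousAt (fun α : ℝ => α / (1 - α)) 0 := continuousAt_id.div hs (by norm_num)
      have hlog : ContinuousAt (fun α : ℝ => Real.logb 2 (1 - α)) 0 :=
        (hs.log (by norm_num)).div_const _
      exact ((hlog.div_const 2).add_const 1).add ((hq.rpow_const (Or.inr hc.le)).div_const 2)
    have h := hcont.tendsto
    simp only [sub_zero, zero_div, Real.logb_one, Real.zero_rpow hc.ne', zero_add, add_zero] at h
    exact h.mono_left nhdsWithin_le_nhds
end
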